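/- Let C1 ⊆ F_{q^m}^n be a linear code and C2 ⊊ C1 a subcode. Then the first RGRW satisfies M_{R,1}(C1,C2) = min{ d_R(x,0) : x ∈ C1 \ C2 }. -/

import Mathlib

open scoped BigOperators

noncomputable section

variable (q : ℕ) (Fq : Type*) {Fqm : Type*} [Field Fq] [Field Fqm] [Algebra Fq Fqm]

/-- `V = V^q`: the image of `V` under the coordinatewise `q`-th power map equals `V`
(membership in the family `Γ(F_{q^m}^n)`). -/
def IsGalClosed {n : ℕ} (V : Submodule Fqm (Fin n → Fqm)) : Prop :=
  (fun v : Fin n → Fqm => fun i => v i ^ q) '' (V : Set (Fin n → Fqm)) =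
    (V : Set (Fin n → Fqm))

/-- The `i`-th relative dimension/intersection profile (RDIP) of `C1` and `C2`. -/
noncomputable def RDIP {n : ℕ} (C1 C2 : Submodule Fqm (Fin n → Fqm)) (i : ℕ) : ℕ :=
  sSup {d : ℕ | ∃ V : Submodule Fqm (Fin n → Fqm), IsGalClosed q V ∧
    Module.finrank Fqm ↥V = i ∧
    d = Module.finrank Fqm ↥(C1 ⊓ V) - Module.finrank Fqm ↥(C2 ⊓ V)}

/-- The `i`-th relative generalized rank weight (RGRW) of `C1` and `C2`. -/
noncomputable def RGRW {n : ℕ} (C1 C2 : Submodule Fqm (Fin n → Fqm)) (i : ℕ) : ℕ :=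
  sInf {d : ℕ | ∃ V : Submodule Fqm (Fin n → Fqm), IsGalClosed q V ∧
    d = Module.finrank Fqm ↥V ∧
    i ≤ Module.finrank Fqm ↥(C1 ⊓ V) - Module.finrank Fqm ↥(C2 ⊓ V)}

/-- The rank weight `d_R(x,0)` of a vector: the `F_q`-dimension of the `F_q`-span of
its coordinates. -/
noncomputable def rankWeight {ι : Type*} (x : ι → Fqm) : ℕ :=
  Module.finrank Fq ↥(Submodule.span Fq (Set.range x))

/-- The minimum rank distance of a (nonzero) linear code. -/
noncomputable def minRankDist {ι : Type*} (C : Submodule Fqm (ι → Fqm)) : ℕ :=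
  sInf {d : ℕ | ∃ x, x ∈ C ∧ x ≠ 0 ∧ d = rankWeight Fq x}

/-- The dual code with respect to the standard bilinear form `⟨x,y⟩ = ∑ i, x i * y i`. -/
def dualCode {n : ℕ} (V : Submodule Fqm (Fin n → Fqm)) : Submodule Fqm (Fin n → Fqm) where
  carrier := {x | ∀ v ∈ V, ∑ i, x i * v i = 0}
  add_mem' := by
    intro a b ha hb v hv
    have h1 := ha v hv
    have h2 := hb v hv
    simp only [Set.mem_setOf_eq] at *
    simp only [Pi.add_apply, add_mul]
    rw [Finset.sum_add_distrib, h1, h2, add_zero]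
  zero_mem' := by
    intro v hv
    simp
  smul_mem' := by
    intro c x hx v hv
    have h := hx v hv
    simp only [Set.mem_setOf_eq] at *
    simp only [Pi.smul_apply, smul_eq_mul, mul_assoc]
    rw [← Finset.mul_sum, h, mul_zero]

/-!
Write `q = #F_q`. The two minima agree because each family dominates the other.

If `x ∈ V` with `V = V^q`, choose coordinates forming a basis of the span of all coordinate forms
on `V`; there are at most `dim V` of them. Every other coordinate form is a combination of these,
and Frobenius invariance together with uniqueness of the coefficients makes every coefficient a
fixed point of `z ↦ z^q`, that is, an element of `F_q`. So the chosen entries of `x` span all its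
entries over `F_q`, and `d_R(x,0) ≤ dim V`.

Conversely, expanding the entries of `x` in an `F_q`-basis of their span writes `x` as an
`F_{q^m}`-combination of `d_R(x,0)` vectors of `F_q^n`, and vectors of `F_q^n` span a space stable
under `V ↦ V^q` because `z ↦ z^q` is surjective.
-/

open Polynomial in
theorem mem_range_algebraMap_iff_pow_card_eq_self {K L : Type*} [Field K] [Fintype K] [CommRing L]
    [IsDomain L] [Algebra K L] {z : L} :
    z ∈ (algebraMap K L).range ↔ z ^ Fintype.card K = z := by
  refine ⟨?_, fun hz ↦ ?_⟩
  · rintro ⟨y, rfl⟩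
    rw [← map_pow, FiniteField.pow_card]
  · have hsplits : (X ^ Fintype.card K - X : K[X]).Splits := by
      rw [splits_iff_card_roots, FiniteField.roots_X_pow_card_sub_X, ← Finset.card_def,
        Finset.card_univ, FiniteField.X_pow_card_sub_X_natDegree_eq _ Fintype.one_lt_card]
    refine hsplits.mem_range_of_isRoot
      (FiniteField.X_pow_card_sub_X_ne_zero K Fintype.one_lt_card) ?_
    simp [hz]

theorem frobeniusAlgHom_surjective (K L : Type*) [Field K] [Fintype K] [Field L] [PerfectField L]
    [Algebra K L] : Function.Surjective (FiniteField.frobeniusAlgHom K L) :=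
  (FiniteField.frobeniusAlgEquiv K L (ringExpChar L)).surjective

section RankWeight

variable {ι : Type*} {Fq}

theorem rankWeight_le_card {κ : Type*} [Fintype κ] {x : ι → Fqm} {y : κ → Fqm}
    (h : ∀ i, x i ∈ Submodule.span Fq (Set.range y)) : rankWeight Fq x ≤ Fintype.card κ :=
  calc
    rankWeight Fq x ≤ (Set.range y).finrank Fq :=
      have := FiniteDimensional.span_of_finite Fq (Set.finite_range y)
      Submodule.finrank_mono (Submodule.span_le.2 (Set.range_subset_iff.2 h))
    _ ≤ Fintype.card κ := finrank_range_le_card y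

variable (Fq) in
theorem exists_mem_span_range_algebraMap_comp [Finite ι] (x : ι → Fqm) :
    ∃ a : Fin (rankWeight Fq x) → ι → Fq,
      x ∈ Submodule.span Fqm (Set.range fun k ↦ algebraMap Fq Fqm ∘ a k) := by
  have := FiniteDimensional.span_of_finite Fq (Set.finite_range x)
  let b := Module.finBasis Fq (Submodule.span Fq (Set.range x))
  let y (i : ι) : Submodule.span Fq (Set.range x) := ⟨x i, Submodule.subset_span ⟨i, rfl⟩⟩
  refine ⟨fun k i ↦ b.repr (y i) k,
    (Submodule.mem_span_range_iff_exists_fun Fqm).2 ⟨fun k ↦ b k, funext fun i ↦ ?_⟩⟩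
  have hy : ∑ k, b.repr (y i) k • (b k : Fqm) = x i := by
    simpa only [Submodule.coe_sum, Submodule.coe_smul] using!
      congrArg Subtype.val (b.sum_repr (y i))
  simpa only [Finset.sum_apply, Pi.smul_apply, Function.comp_apply, smul_eq_mul, mul_comm,
    Algebra.smul_def (R := Fq) (A := Fqm)] using! hy

end RankWeight

section GalClosed

variable [Fintype Fq] {n : ℕ}

/-- The coordinatewise Frobenius map `v ↦ v^q` on `F_{q^m}^n`, semilinear over the Frobenius
endomorphism of `F_{q^m}`, so that `V^q` is `V.map (coordFrobenius Fq)`. -/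
def coordFrobenius :
    (Fin n → Fqm) →ₛₗ[(FiniteField.frobeniusAlgHom Fq Fqm).toRingHom] (Fin n → Fqm) where
  toFun v i := v i ^ Fintype.card Fq
  map_add' v w := funext fun i ↦ map_add (FiniteField.frobeniusAlgHom Fq Fqm) (v i) (w i)
  map_smul' c v := funext fun i ↦ mul_pow c (v i) _

theorem isGalClosed_span_range_algebraMap_comp [PerfectField Fqm] {κ : Type*}
    (a : κ → Fin n → Fq) :
    IsGalClosed (Fintype.card Fq)
      (Submodule.span Fqm (Set.range fun k ↦ algebraMap Fq Fqm ∘ a k)) := by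
  have : RingHomSurjective (FiniteField.frobeniusAlgHom Fq Fqm).toRingHom :=
    ⟨frobeniusAlgHom_surjective Fq Fqm⟩
  have hfixed (k : κ) : coordFrobenius Fq (algebraMap Fq Fqm ∘ a k) = algebraMap Fq Fqm ∘ a k :=
    funext fun i ↦ mem_range_algebraMap_iff_pow_card_eq_self.1 ⟨a k i, rfl⟩
  have hmap : (Submodule.span Fqm (Set.range fun k ↦ algebraMap Fq Fqm ∘ a k)).map
      (coordFrobenius Fq) = Submodule.span Fqm (Set.range fun k ↦ algebraMap Fq Fqm ∘ a k) := by
    rw [Submodule.map_span, ← Set.range_comp]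
    exact congrArg (fun f ↦ Submodule.span Fqm (Set.range f)) (funext hfixed)
  exact congrArg SetLike.coe hmap

variable {Fq}

/-- The `i`-th coordinate as a linear form on `V`; linear relations among these forms are the
relations among coordinates that hold throughout `V`. -/
def coordForm (V : Submodule Fqm (Fin n → Fqm)) (i : Fin n) : Module.Dual Fqm V :=
  (LinearMap.proj i).domRestrict V

theorem IsGalClosed.coeff_mem_range_algebraMap {V : Submodule Fqm (Fin n → Fqm)}
    (hV : IsGalClosed (Fintype.card Fq) V) {κ : Type*} [Fintype κ] {a : κ → Fin n}
    (ha : LinearIndependent Fqm (coordForm V ∘ a)) {j : Fin n} {c : κ → Fqm}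
    (hc : ∑ k, c k • coordForm V (a k) = coordForm V j) (k : κ) :
    c k ∈ (algebraMap Fq Fqm).range := by
  have hrel (v) (hv : v ∈ V) : ∑ k, c k * v (a k) = v j := by
    simpa using! LinearMap.congr_fun hc ⟨v, hv⟩
  have hrelFrob : ∑ k, c k ^ Fintype.card Fq • coordForm V (a k) = coordForm V j := by
    ext ⟨w, hw⟩
    obtain ⟨v, hv, rfl⟩ := hV.ge hw
    have hFrob := congrArg (FiniteField.frobeniusAlgHom Fq Fqm) (hrel v hv)
    simpa [coordForm, mul_pow] using hFrob
  rw [mem_range_algebraMap_iff_pow_card_eq_self]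
  exact Fintype.linearIndependent_iffₛ.1 ha _ _ (hrelFrob.trans hc.symm) k

theorem IsGalClosed.rankWeight_le_finrank {V : Submodule Fqm (Fin n → Fqm)}
    (hV : IsGalClosed (Fintype.card Fq) V) {x : Fin n → Fqm} (hx : x ∈ V) :
    rankWeight Fq x ≤ Module.finrank Fqm V := by
  obtain ⟨κ, a, ha_inj, ha_span, ha⟩ := exists_linearIndependent' Fqm (coordForm V)
  have := Fintype.ofInjective a ha_inj
  have hspan (j : Fin n) : x j ∈ Submodule.span Fq (Set.range (x ∘ a)) := by
    have hj : coordForm V j ∈ Submodule.span Fqm (Set.range (coordForm V ∘ a)) :=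
      ha_span ▸ Submodule.subset_span ⟨j, rfl⟩
    obtain ⟨c, hc⟩ := (Submodule.mem_span_range_iff_exists_fun Fqm).1 hj
    choose d hd using hV.coeff_mem_range_algebraMap ha hc
    refine (Submodule.mem_span_range_iff_exists_fun Fq).2 ⟨d, ?_⟩
    simpa [Algebra.smul_def, hd] using! LinearMap.congr_fun hc ⟨x, hx⟩
  calc
    rankWeight Fq x ≤ Fintype.card κ := rankWeight_le_card hspan
    _ ≤ Module.finrank Fqm (Module.Dual Fqm V) := ha.fintype_card_le_finrank
    _ = Module.finrank Fqm V := Subspace.dual_finrank_eq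

variable (Fq) in
theorem exists_isGalClosed_mem_finrank_le_rankWeight [PerfectField Fqm] (x : Fin n → Fqm) :
    ∃ V : Submodule Fqm (Fin n → Fqm), IsGalClosed (Fintype.card Fq) V ∧ x ∈ V ∧
      Module.finrank Fqm V ≤ rankWeight Fq x := by
  obtain ⟨a, hx⟩ := exists_mem_span_range_algebraMap_comp Fq x
  exact ⟨_, isGalClosed_span_range_algebraMap_comp Fq a, hx,
    (finrank_range_le_card _).trans_eq (Fintype.card_fin _)⟩

end GalClosed

theorem finrank_inf_lt_finrank_inf_iff {K M : Type*} [Field K] [AddCommGroup M] [Module K M]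
    [FiniteDimensional K M] {C D : Submodule K M} (hDC : D ≤ C) (V : Submodule K M) :
    Module.finrank K ↥(D ⊓ V) < Module.finrank K ↥(C ⊓ V) ↔ ∃ x ∈ C, x ∉ D ∧ x ∈ V := by
  refine ⟨fun h ↦ ?_, fun ⟨x, hxC, hxD, hxV⟩ ↦ ?_⟩
  · have hnle : ¬ C ⊓ V ≤ D ⊓ V := fun hle ↦ h.not_ge (Submodule.finrank_mono hle)
    obtain ⟨x, ⟨hxC, hxV⟩, hx⟩ := SetLike.not_le_iff_exists.1 hnle
    exact ⟨x, hxC, fun hxD ↦ hx ⟨hxD, hxV⟩, hxV⟩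
  · have hlt : D ⊓ V < C ⊓ V := SetLike.lt_iff_le_and_exists.2
      ⟨inf_le_inf_right V hDC, x, Submodule.mem_inf.2 ⟨hxC, hxV⟩,
        fun hx ↦ hxD (Submodule.mem_inf.1 hx).1⟩
    exact Submodule.finrank_lt_finrank_of_lt hlt

theorem stmt5_general (n : ℕ) [Fintype Fq] [PerfectField Fqm] (hq : Fintype.card Fq = q)
    (C1 C2 : Submodule Fqm (Fin n → Fqm)) (h12 : C2 < C1) :
    RGRW q C1 C2 1 = sInf {d : ℕ | ∃ x, x ∈ C1 ∧ x ∉ C2 ∧ d = rankWeight Fq x} := by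
  subst hq
  refine csInf_eq_csInf_of_forall_exists_le ?_ ?_
  · rintro _ ⟨V, hV, rfl, hdim⟩
    obtain ⟨x, hx1, hx2, hxV⟩ :=
      (finrank_inf_lt_finrank_inf_iff h12.le V).1 (Nat.sub_pos_iff_lt.1 hdim)
    exact ⟨_, ⟨x, hx1, hx2, rfl⟩, hV.rankWeight_le_finrank hxV⟩
  · rintro _ ⟨x, hx1, hx2, rfl⟩
    obtain ⟨V, hV, hxV, hle⟩ := exists_isGalClosed_mem_finrank_le_rankWeight Fq x
    have hdim := (finrank_inf_lt_finrank_inf_iff h12.le V).2 ⟨x, hx1, hx2, hxV⟩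
    exact ⟨_, ⟨V, hV, rfl, Nat.sub_pos_iff_lt.2 hdim⟩, hle⟩

/-- The first RGRW satisfies
`M_{R,1}(C1,C2) = min{ d_R(x,0) : x ∈ C1 \ C2 }`. -/
theorem stmt5 (m n : ℕ) [Fintype Fq] [Fintype Fqm]
    (hq : Fintype.card Fq = q) (hm : Module.finrank Fq Fqm = m)
    (C1 C2 : Submodule Fqm (Fin n → Fqm)) (h12 : C2 < C1) :
    RGRW q C1 C2 1 = sInf {d : ℕ | ∃ x, x ∈ C1 ∧ x ∉ C2 ∧ d = rankWeight Fq x} :=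
  stmt5_general q Fq n hq C1 C2 h12

end
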